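/- arXiv:math/0602033 — 2 statements merged into one kernel-verified Lean document; each statement's English description precedes it below -/
import Mathlib

section
/- Given not necessarily distinct complex numbers z_1, ..., z_n with Im z_k > 0 for all k, there exists a unique n×n Jacobi matrix J with Im b_1 > 0, b_k real for k ≥ 2, and a_k > 0 for all k, whose eigenvalues counted with algebraic multiplicity are exactly z_1, ..., z_n. -/
/-- The `n × n` complex Jacobi matrix with diagonal entries `b 1, …, b n` and symmetric
off-diagonal entries `a 1, …, a (n-1)` (1-based indexing). -/
def jacobiMatrix (n : ℕ) (b a : ℕ → ℂ) : Matrix (Fin n) (Fin n) ℂ :=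
  Matrix.of fun i j =>
    if (i : ℕ) = (j : ℕ) then b ((i : ℕ) + 1)
    else if (i : ℕ) + 1 = (j : ℕ) then a ((i : ℕ) + 1)
    else if (j : ℕ) + 1 = (i : ℕ) then a ((j : ℕ) + 1)
    else 0

open Polynomial in
theorem jacobiMatrix_charpoly_succ_succ (n : ℕ) (b a : ℕ → ℂ) :
    (jacobiMatrix (n + 2) b a).charpoly =
      (X - C (b 1)) * (jacobiMatrix (n + 1) (fun k => b (k + 1)) fun k => a (k + 1)).charpoly -
        C (a 1 ^ 2) * (jacobiMatrix n (fun k => b (k + 2)) fun k => a (k + 2)).charpoly := by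
  have h0 : (jacobiMatrix (n + 2) b a).charmatrix.submatrix Fin.succ Fin.succ =
      (jacobiMatrix (n + 1) (fun k => b (k + 1)) fun k => a (k + 1)).charmatrix := by
    ext1 i j
    simp [Matrix.charmatrix_apply, jacobiMatrix, Matrix.diagonal_apply]
  have h1 : (jacobiMatrix (n + 2) b a).charmatrix.submatrix (fun i => (Fin.succ i).succ)
        (fun j => j.succ.succ) =
      (jacobiMatrix n (fun k => b (k + 2)) fun k => a (k + 2)).charmatrix := by
    ext1 i j
    simp [Matrix.charmatrix_apply, jacobiMatrix, Matrix.diagonal_apply]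
  have h2 : ((jacobiMatrix (n + 2) b a).charmatrix.submatrix Fin.succ
      (Fin.succAbove 1)).det =
        -C (a 1) * (jacobiMatrix n (fun k => b (k + 2)) fun k => a (k + 2)).charpoly := by
    rw [Matrix.det_succ_column_zero, Finset.sum_eq_single 0]
    · rw [Matrix.charpoly, ← h1]
      congr 1
      · simp [jacobiMatrix]
    · intro i _ hi
      have : (i : ℕ) ≠ 0 := fun h => hi (Fin.ext h)
      simp [jacobiMatrix, this]
    · simp
  rw [Matrix.charpoly, Matrix.det_succ_row_zero, Fin.sum_univ_succ, Fin.sum_univ_succ,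
    Finset.sum_eq_zero]
  · simp only [Fin.succ_zero_eq_one, h2, Fin.succAbove_zero, h0, Matrix.charpoly]
    simp [jacobiMatrix]
    ring
  · intro i _
    simp [jacobiMatrix, Fin.ext_iff]

open Polynomial in
theorem jacobiMatrix_one_charpoly (b a : ℕ → ℂ) :
    (jacobiMatrix 1 b a).charpoly = X - C (b 1) := by
  simp [Matrix.charpoly, jacobiMatrix]

theorem charpoly_coeff_card {n : ℕ} (M : Matrix (Fin n) (Fin n) ℂ) : M.charpoly.coeff n = 1 := by
  simpa [Polynomial.leadingCoeff] using M.charpoly_monic.leadingCoeff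

open Polynomial in
/-- A Jacobi matrix with positive off-diagonal entries is determined by its characteristic polynomial
together with the one of the matrix obtained by deleting the first row and column. -/
theorem jacobiMatrix_entries_eq_of_charpoly_eq (n : ℕ) (b b' : ℕ → ℂ) (a a' : ℕ → ℝ)
    (ha : ∀ k, 1 ≤ k → k ≤ n → 0 < a k) (ha' : ∀ k, 1 ≤ k → k ≤ n → 0 < a' k)
    (h : (jacobiMatrix (n + 1) b fun k => (a k : ℂ)).charpoly =
      (jacobiMatrix (n + 1) b' fun k => (a' k : ℂ)).charpoly)
    (h' : (jacobiMatrix n (fun k => b (k + 1)) fun k => (a (k + 1) : ℂ)).charpoly =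
      (jacobiMatrix n (fun k => b' (k + 1)) fun k => (a' (k + 1) : ℂ)).charpoly) :
    (∀ k, 1 ≤ k → k ≤ n + 1 → b k = b' k) ∧ ∀ k, 1 ≤ k → k ≤ n → a k = a' k := by
  induction n generalizing b b' a a' with
  | zero =>
    rw [jacobiMatrix_one_charpoly, jacobiMatrix_one_charpoly, sub_right_inj, C_inj] at h
    refine ⟨fun k h1 h2 => ?_, fun k h1 h2 => by omega⟩
    obtain rfl : k = 1 := by omega
    exact h
  | succ n ih =>
    rw [jacobiMatrix_charpoly_succ_succ, jacobiMatrix_charpoly_succ_succ, ← h'] at h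
    have hD := charpoly_coeff_card
      (jacobiMatrix (n + 1) (fun k => b (k + 1)) fun k => (a (k + 1) : ℂ))
    set D := (jacobiMatrix (n + 1) (fun k => b (k + 1)) fun k => (a (k + 1) : ℂ)).charpoly
    have hR := charpoly_coeff_card (jacobiMatrix n (fun k => b (k + 2)) fun k => (a (k + 2) : ℂ))
    have hR' := charpoly_coeff_card
      (jacobiMatrix n (fun k => b' (k + 2)) fun k => (a' (k + 2) : ℂ))
    have hS := coeff_eq_zero_of_natDegree_lt (n := n + 1) (lt_of_eq_of_lt
      (jacobiMatrix n (fun k => b (k + 2)) fun k => (a (k + 2) : ℂ)).charpoly_natDegree_eq_dim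
      (by simp))
    have hS' := coeff_eq_zero_of_natDegree_lt (n := n + 1) (lt_of_eq_of_lt
      (jacobiMatrix n (fun k => b' (k + 2)) fun k => (a' (k + 2) : ℂ)).charpoly_natDegree_eq_dim
      (by simp))
    set R := (jacobiMatrix n (fun k => b (k + 2)) fun k => (a (k + 2) : ℂ)).charpoly
    set R' := (jacobiMatrix n (fun k => b' (k + 2)) fun k => (a' (k + 2) : ℂ)).charpoly
    have e : C (b' 1 - b 1) * D = C ((a 1 : ℂ) ^ 2) * R - C ((a' 1 : ℂ) ^ 2) * R' := by
      rw [C_sub]; linear_combination h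
    have hb : b' 1 = b 1 := by
      have := congrArg (fun p => p.coeff (n + 1)) e
      simp only [coeff_sub, coeff_C_mul, hD, hS, hS'] at this
      linear_combination this
    have e2 : C ((a 1 : ℂ) ^ 2) * R = C ((a' 1 : ℂ) ^ 2) * R' := by
      rw [hb, sub_self, C_0, zero_mul] at e
      exact (sub_eq_zero.1 e.symm)
    have hsq : (a 1 : ℂ) ^ 2 = (a' 1 : ℂ) ^ 2 := by
      have := congrArg (fun p => p.coeff n) e2
      simpa only [coeff_C_mul, hR, hR', mul_one] using this
    have ha1 := ha 1 le_rfl (by omega)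
    have ha1' := ha' 1 le_rfl (by omega)
    have haa : a 1 = a' 1 := (pow_left_inj₀ ha1.le ha1'.le two_ne_zero).1 (by exact_mod_cast hsq)
    have hRR : R = R' := by
      rw [hsq] at e2
      refine mul_left_cancel₀ ?_ e2
      rw [Ne, C_eq_zero]
      exact pow_ne_zero _ (by exact_mod_cast ha1'.ne')
    obtain ⟨i1, i2⟩ := ih (fun k => b (k + 1)) (fun k => b' (k + 1)) (fun k => a (k + 1))
      (fun k => a' (k + 1)) (fun k h1 h2 => ha _ (by omega) (by omega))
      (fun k h1 h2 => ha' _ (by omega) (by omega)) h' hRR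
    constructor
    · intro k h1 h2
      rcases Nat.lt_or_ge k 2 with hk | hk
      · obtain rfl : k = 1 := by omega
        exact hb.symm
      · obtain ⟨j, rfl⟩ := Nat.exists_eq_add_of_le' h1
        exact i1 j (by omega) (by omega)
    · intro k h1 h2
      rcases Nat.lt_or_ge k 2 with hk | hk
      · obtain rfl : k = 1 := by omega
        exact haa
      · obtain ⟨j, rfl⟩ := Nat.exists_eq_add_of_le' h1
        exact i2 j (by omega) (by omega)

theorem jacobiMatrix_charpoly_map_conj (n : ℕ) (b : ℕ → ℂ) (a : ℕ → ℝ)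
    (hb : ∀ k, 1 ≤ k → k ≤ n → (b k).im = 0) :
    (jacobiMatrix n b fun k => (a k : ℂ)).charpoly.map (starRingEnd ℂ) =
      (jacobiMatrix n b fun k => (a k : ℂ)).charpoly := by
  rw [← Matrix.charpoly_map]
  congr 1
  ext i j
  have := Complex.conj_eq_iff_im.2 (hb (i + 1) (by omega) (by omega))
  simp only [jacobiMatrix, Matrix.map_apply, Matrix.of_apply]
  split_ifs <;> simp [this]

open Polynomial in
theorem jacobiMatrix_charpoly_sub_map_conj (n : ℕ) (b : ℕ → ℂ) (a : ℕ → ℝ)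
    (hb : ∀ k, 2 ≤ k → k ≤ n + 1 → (b k).im = 0) :
    (jacobiMatrix (n + 1) b fun k => (a k : ℂ)).charpoly.map (starRingEnd ℂ) -
        (jacobiMatrix (n + 1) b fun k => (a k : ℂ)).charpoly =
      C (b 1 - starRingEnd ℂ (b 1)) *
        (jacobiMatrix n (fun k => b (k + 1)) fun k => (a (k + 1) : ℂ)).charpoly := by
  cases n with
  | zero =>
    rw [jacobiMatrix_one_charpoly]
    simp [Matrix.charpoly]
  | succ n =>
    have h1 := jacobiMatrix_charpoly_map_conj (n + 1) (fun k => b (k + 1)) (fun k => a (k + 1))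
      fun k _ _ => hb _ (by omega) (by omega)
    have h2 := jacobiMatrix_charpoly_map_conj n (fun k => b (k + 2)) (fun k => a (k + 2))
      fun k _ _ => hb _ (by omega) (by omega)
    rw [jacobiMatrix_charpoly_succ_succ]
    simp only [Polynomial.map_sub, Polynomial.map_mul, map_X, map_C, h1, h2, C_pow,
      Polynomial.map_pow,
      Complex.conj_ofReal, C_sub]
    ring

open Polynomial in
theorem jacobiMatrix_eq_of_charpoly_eq (n : ℕ) (b b' : ℕ → ℂ) (a a' : ℕ → ℝ)
    (hb : 0 < (b 1).im) (hr : ∀ k, 2 ≤ k → k ≤ n + 1 → (b k).im = 0)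
    (hr' : ∀ k, 2 ≤ k → k ≤ n + 1 → (b' k).im = 0)
    (ha : ∀ k, 1 ≤ k → k ≤ n → 0 < a k) (ha' : ∀ k, 1 ≤ k → k ≤ n → 0 < a' k)
    (h : (jacobiMatrix (n + 1) b fun k => (a k : ℂ)).charpoly =
      (jacobiMatrix (n + 1) b' fun k => (a' k : ℂ)).charpoly) :
    jacobiMatrix (n + 1) b (fun k => (a k : ℂ)) = jacobiMatrix (n + 1) b' fun k => (a' k : ℂ) := by
  have e := jacobiMatrix_charpoly_sub_map_conj n b a hr
  rw [h, jacobiMatrix_charpoly_sub_map_conj n b' a' hr'] at e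
  have hc : b' 1 - starRingEnd ℂ (b' 1) = b 1 - starRingEnd ℂ (b 1) := by
    have := congrArg (fun p => p.coeff n) e
    simpa only [coeff_C_mul, charpoly_coeff_card, mul_one] using this
  have h0 : b 1 - starRingEnd ℂ (b 1) ≠ 0 := by
    rw [Complex.sub_conj]
    simp [hb.ne']
  rw [hc] at e
  have hD := mul_left_cancel₀ (C_ne_zero.2 h0) e
  obtain ⟨i1, i2⟩ := jacobiMatrix_entries_eq_of_charpoly_eq n b b' a a' ha ha' h hD.symm
  ext i j
  simp only [jacobiMatrix, Matrix.of_apply]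
  split_ifs
  · exact i1 _ (by omega) (by omega)
  · rw [i2 _ (by omega) (by omega)]
  · rw [i2 _ (by omega) (by omega)]
  · rfl

open scoped InnerProductSpace in
theorem ne_zero_of_forall_eigenvector_orthogonal_eq_zero {E : Type*} [NormedAddCommGroup E]
    [InnerProductSpace ℂ E] (hE : 0 < Module.finrank ℂ E) (A : E →ₗ[ℂ] E) (v : E)
    (hv : ∀ (w : E) (μ : ℂ), A w = μ • w → ⟪v, w⟫_ℂ = 0 → w = 0) : v ≠ 0 := by
  rintro rfl
  have : FiniteDimensional ℂ E := .of_finrank_pos hE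
  have : Nontrivial E := Module.nontrivial_of_finrank_pos hE
  obtain ⟨μ, hμ⟩ := Module.End.exists_eigenvalue A
  obtain ⟨w, hw⟩ := hμ.exists_hasEigenvector
  exact hw.2 (hv w μ hw.apply_eq_smul (inner_zero_left _))

open scoped InnerProductSpace in
/-- Lanczos tridiagonalization: a symmetric operator with a cyclic vector `v` is a Jacobi matrix
with positive off-diagonal entries in some orthonormal basis starting along `v`. -/
theorem LinearMap.IsSymmetric.exists_orthonormal_jacobiMatrix (n : ℕ) {E : Type*}
    [NormedAddCommGroup E] [InnerProductSpace ℂ E] (hE : Module.finrank ℂ E = n + 1)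
    (A : E →ₗ[ℂ] E) (hA : A.IsSymmetric) (v : E)
    (hv : ∀ (w : E) (μ : ℂ), A w = μ • w → ⟪v, w⟫_ℂ = 0 → w = 0) :
    ∃ (e : Fin (n + 1) → E) (b a : ℕ → ℝ) (r : ℝ), Orthonormal ℂ e ∧ (∀ k, 0 < a k) ∧ 0 < r ∧
      v = (r : ℂ) • e 0 ∧
      ∀ i j, ⟪e i, A (e j)⟫_ℂ =
        jacobiMatrix (n + 1) (fun k => (b k : ℂ)) (fun k => (a k : ℂ)) i j := by
  induction n generalizing E with
  | zero =>
    have hvE := ne_zero_of_forall_eigenvector_orthogonal_eq_zero (by omega) A v hv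
    have hnv : 0 < ‖v‖ := norm_pos_iff.2 hvE
    have hnv' : (‖v‖ : ℂ) ≠ 0 := by exact_mod_cast hnv.ne'
    refine ⟨fun _ => (‖v‖ : ℂ)⁻¹ • v,
      fun _ => RCLike.re ⟪(‖v‖ : ℂ)⁻¹ • v, A ((‖v‖ : ℂ)⁻¹ • v)⟫_ℂ, fun _ => 1, ‖v‖,
      ⟨fun _ => by simp [norm_smul, hnv.ne'], fun i j h => (h (Fin.ext (by omega))).elim⟩,
      fun _ => one_pos, hnv, by rw [smul_inv_smul₀ hnv'], fun i j => ?_⟩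
    rw [← hA.coe_re_inner_self_apply]
    simp [jacobiMatrix]
  | succ n ih =>
    have hvE := ne_zero_of_forall_eigenvector_orthogonal_eq_zero (by omega) A v hv
    have hnv : 0 < ‖v‖ := norm_pos_iff.2 hvE
    have hnv' : (‖v‖ : ℂ) ≠ 0 := by exact_mod_cast hnv.ne'
    have : FiniteDimensional ℂ E := .of_finrank_pos (by omega)
    have : Fact (Module.finrank ℂ E = n + 1 + 1) := ⟨hE⟩
    let K : Submodule ℂ E := (ℂ ∙ v)ᗮ
    have hK : Module.finrank ℂ K = n + 1 := Submodule.finrank_orthogonal_span_singleton hvE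
    let A' : K →ₗ[ℂ] K := K.orthogonalProjectionOnto.toLinearMap ∘ₗ A ∘ₗ K.subtype
    let v' : K := K.orthogonalProjectionOnto (A v)
    have hA' : A'.IsSymmetric := fun x y => by
      simp only [A', LinearMap.comp_apply, ContinuousLinearMap.coe_coe,
        Submodule.inner_orthogonalProjectionOnto_eq_of_mem_right,
        Submodule.inner_orthogonalProjectionOnto_eq_of_mem_left]
      exact hA _ _
    have hv' : ∀ (w : K) (μ : ℂ), A' w = μ • w → ⟪v', w⟫_ℂ = 0 → w = 0 := by
      intro w μ h1 h2
      rw [Submodule.inner_orthogonalProjectionOnto_eq_of_mem_right, hA] at h2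
      have hm : A w ∈ K := Submodule.mem_orthogonal_singleton_iff_inner_right.2 h2
      have h3 : A w = μ • (w : E) := by
        rw [← Submodule.coe_smul, ← h1]
        exact (Submodule.orthogonalProjectionOnto_mem_subspace_eq_self (K := K) ⟨A w, hm⟩ ▸ rfl)
      exact Subtype.ext (hv w μ h3 (Submodule.mem_orthogonal_singleton_iff_inner_right.1 w.2))
    obtain ⟨e, b, a, r, he, ha, hr, hve, hJ⟩ := ih hK A' hA' v' hv'
    set e0 : E := (‖v‖ : ℂ)⁻¹ • v with he0
    have hoff (j) : ⟪e0, A (e j)⟫_ℂ = if j = 0 then ((r / ‖v‖ : ℝ) : ℂ) else 0 := by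
      rw [← hA, he0, map_smul, inner_smul_left,
        ← Submodule.inner_orthogonalProjectionOnto_eq_of_mem_right]
      change _ * ⟪v', e j⟫_ℂ = _
      rw [hve, inner_smul_left, orthonormal_iff_ite.1 he]
      rcases eq_or_ne j 0 with rfl | hj
      · simp; ring
      · simp [hj, hj.symm]
    have hoff' (j) : ⟪(e j : E), A e0⟫_ℂ = if j = 0 then ((r / ‖v‖ : ℝ) : ℂ) else 0 := by
      rw [← hA, ← inner_conj_symm, hoff]
      split_ifs <;> simp
    have hperp (j) : ⟪e0, (e j : E)⟫_ℂ = 0 := by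
      rw [he0, inner_smul_left, Submodule.mem_orthogonal_singleton_iff_inner_right.1 (e j).2,
        mul_zero]
    have hperp' (j) : ⟪(e j : E), e0⟫_ℂ = 0 := inner_eq_zero_symm.1 (hperp j)
    have hnorm : ⟪e0, e0⟫_ℂ = 1 := by
      rw [inner_self_eq_norm_sq_to_K]
      simp [he0, norm_smul, hnv.ne']
    refine ⟨Fin.cons e0 fun i => (e i : E),
      fun k => if k = 1 then RCLike.re ⟪e0, A e0⟫_ℂ else b (k - 1),
      fun k => if k = 1 then r / ‖v‖ else a (k - 1), ‖v‖, ?_, fun k => ?_, hnv, ?_, ?_⟩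
    · rw [orthonormal_iff_ite]
      intro i j
      refine Fin.cases ?_ (fun i => ?_) i <;> refine Fin.cases ?_ (fun j => ?_) j
      · simpa using hnorm
      · simpa [(Fin.succ_ne_zero j).symm] using hperp j
      · simpa using hperp' i
      · simpa using orthonormal_iff_ite.1 he i j
    · dsimp only
      split_ifs
      · positivity
      · exact ha _
    · rw [Fin.cons_zero, he0, smul_inv_smul₀ hnv']
    · intro i j
      refine Fin.cases ?_ (fun i => ?_) i <;> refine Fin.cases ?_ (fun j => ?_) j
      · simpa [jacobiMatrix] using (hA.coe_re_inner_self_apply e0).symm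
      · rw [Fin.cons_zero, Fin.cons_succ, hoff]
        rcases eq_or_ne j 0 with rfl | hj
        · simp [jacobiMatrix]
        · simp [jacobiMatrix, hj]
      · rw [Fin.cons_zero, Fin.cons_succ, hoff']
        rcases eq_or_ne i 0 with rfl | hj
        · simp [jacobiMatrix]
        · simp [jacobiMatrix, hj]
      · have := hJ i j
        simp only [A', LinearMap.comp_apply, ContinuousLinearMap.coe_coe,
          Submodule.inner_orthogonalProjectionOnto_eq_of_mem_left] at this
        simpa [jacobiMatrix] using this

/-- Livšic's triangular model of a dissipative operator with rank-one imaginary part. -/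
noncomputable def livsicMatrix {n : ℕ} (z : Fin n → ℂ) : Matrix (Fin n) (Fin n) ℂ :=
  Matrix.of fun i j =>
    if i = j then z i
    else if i < j then 2 * Complex.I * (√(z i).im * √(z j).im : ℝ)
    else 0

open Polynomial in
theorem livsicMatrix_charpoly {n : ℕ} (z : Fin n → ℂ) :
    (livsicMatrix z).charpoly = ∏ k, (X - C (z k)) := by
  rw [Matrix.charpoly_of_isUpperTriangular]
  · simp [livsicMatrix]
  · intro i j h
    have h : j < i := h
    simp [livsicMatrix, h.ne', h.not_gt]

theorem livsicMatrix_sub_isHermitian {n : ℕ} (z : Fin n → ℂ) (hz : ∀ k, 0 < (z k).im) :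
    (livsicMatrix z - Matrix.of fun i j =>
      Complex.I * (√(z i).im * √(z j).im : ℝ)).IsHermitian := by
  ext i j
  simp only [livsicMatrix, Matrix.conjTranspose_apply, Matrix.sub_apply, Matrix.of_apply]
  rcases lt_trichotomy i j with h | rfl | h
  · simp [h.ne, h.ne', h, h.not_gt]
    ring
  · simp only [if_true, Real.mul_self_sqrt (hz i).le]
    apply Complex.ext <;> simp
  · simp [h.ne, h.ne', h, h.not_gt]
    ring

open Polynomial in
open scoped InnerProductSpace in
theorem exists_jacobiMatrix_charpoly_eq (n : ℕ) (z : Fin (n + 1) → ℂ) (hz : ∀ k, 0 < (z k).im) :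
    ∃ (b : ℕ → ℂ) (a : ℕ → ℝ), 0 < (b 1).im ∧ (∀ k, 2 ≤ k → (b k).im = 0) ∧ (∀ k, 0 < a k) ∧
      (jacobiMatrix (n + 1) b fun k => (a k : ℂ)).charpoly = ∏ k, (X - C (z k)) := by
  let E := EuclideanSpace ℂ (Fin (n + 1))
  let l : E := WithLp.toLp 2 fun i => (√(z i).im : ℂ)
  let T : E →ₗ[ℂ] E := (livsicMatrix z).toEuclideanLin
  let A : E →ₗ[ℂ] E := (livsicMatrix z - Matrix.of fun i j =>
      Complex.I * (√(z i).im * √(z j).im : ℝ)).toEuclideanLin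
  have hA : A.IsSymmetric :=
    Matrix.isSymmetric_toEuclideanLin_iff.2 (livsicMatrix_sub_isHermitian z hz)
  have hT (w : E) : T w = A w + (Complex.I * ⟪l, w⟫_ℂ) • l := by
    have hl : ⟪l, w⟫_ℂ = ∑ j, w j * (√(z j).im : ℂ) := by
      refine (PiLp.inner_apply _ _).trans ?_
      simp [l]
    rw [hl]
    ext i
    change (livsicMatrix z).mulVec w.ofLp i = Matrix.mulVec (_ - _) w.ofLp i + _ * (√(z i).im : ℂ)
    rw [Matrix.sub_mulVec, Pi.sub_apply, sub_add, eq_comm, sub_eq_self, sub_eq_zero]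
    simp only [Matrix.mulVec, dotProduct, Matrix.of_apply, Finset.mul_sum, Finset.sum_mul]
    refine Finset.sum_congr rfl fun j _ => ?_
    push_cast
    ring
  have hchar : T.charpoly = ∏ k, (X - C (z k)) := by
    rw [← livsicMatrix_charpoly]
    exact (livsicMatrix z).charpoly_toLin (PiLp.basisFun 2 ℂ (Fin (n + 1)))
  have hcyc : ∀ (w : E) (μ : ℂ), A w = μ • w → ⟪l, w⟫_ℂ = 0 → w = 0 := by
    intro w μ h1 h2
    by_contra hw
    have hTw : T w = μ • w := by rw [hT, h1, h2]; simp
    have hμ := hA.conj_eigenvalue_eq_self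
      (Module.End.hasEigenvalue_of_hasEigenvector ⟨Module.End.mem_eigenspace_iff.2 h1, hw⟩)
    have hroot := (Module.End.hasEigenvalue_iff_isRoot_charpoly T μ).1
      (Module.End.hasEigenvalue_of_hasEigenvector ⟨Module.End.mem_eigenspace_iff.2 hTw, hw⟩)
    rw [hchar, IsRoot, eval_prod, Finset.prod_eq_zero_iff] at hroot
    obtain ⟨k, -, hk⟩ := hroot
    rw [eval_sub, eval_X, eval_C, sub_eq_zero] at hk
    have := hz k
    rw [← hk, Complex.conj_eq_iff_im.1 hμ] at this
    exact lt_irrefl _ this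
  obtain ⟨e, b, a, r, he, ha, hr, hl, hJ⟩ :=
    hA.exists_orthonormal_jacobiMatrix n (by simp [E]) A l hcyc
  let B : OrthonormalBasis (Fin (n + 1)) ℂ E :=
    OrthonormalBasis.mk he (he.linearIndependent.span_eq_top_of_card_eq_finrank (by simp [E])).ge
  refine ⟨fun k => if k = 1 then b 1 + Complex.I * (r ^ 2 : ℝ) else b k, a, ?_, fun k hk => ?_,
    ha, ?_⟩
  · simpa [← Complex.ofReal_pow] using pow_pos hr 2
  · simp [show k ≠ 1 by omega]
  · rw [← hchar, ← LinearMap.charpoly_toMatrix T B.toBasis]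
    congr 1
    ext i j
    have h1 : LinearMap.toMatrix B.toBasis B.toBasis T i j = ⟪e i, T (e j)⟫_ℂ := by
      simpa [B] using LinearMap.toMatrixOrthonormal_apply_apply B T i j
    rw [h1, hT, inner_add_right, hJ, inner_smul_right, hl, inner_smul_left, inner_smul_right,
      orthonormal_iff_ite.1 he, orthonormal_iff_ite.1 he]
    refine Fin.cases ?_ (fun i => ?_) i <;> refine Fin.cases ?_ (fun j => ?_) j
    · simp [jacobiMatrix]; ring
    all_goals simp [jacobiMatrix, (Fin.succ_ne_zero _).symm]

/-- **Inverse spectral theorem for finite dissipative Jacobi matrices with rank-one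
imaginary part.**  Given `z₁, …, zₙ` in the open upper half-plane (not necessarily
distinct), there exists a unique `n × n` Jacobi matrix with `Im b₁ > 0`, `bₖ` real for
`k ≥ 2` and `aₖ > 0`, whose eigenvalues counted with algebraic multiplicity are exactly
`z₁, …, zₙ`. -/
theorem dissipative_jacobi_inverse_spectral_problem
    (n : ℕ) (hn : 1 ≤ n) (z : Fin n → ℂ) (hz : ∀ k, 0 < (z k).im) :
    ∃! J : Matrix (Fin n) (Fin n) ℂ,
      (∃ (b : ℕ → ℂ) (a : ℕ → ℝ),
          J = jacobiMatrix n b (fun k => (a k : ℂ)) ∧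
          0 < (b 1).im ∧
          (∀ k, 2 ≤ k → k ≤ n → (b k).im = 0) ∧
          (∀ k, 1 ≤ k → k ≤ n - 1 → 0 < a k)) ∧
      J.charpoly = ∏ k : Fin n, (Polynomial.X - Polynomial.C (z k)) := by
  obtain ⟨n, rfl⟩ := Nat.exists_eq_add_of_le' hn
  obtain ⟨b, a, hb, hr, ha, hc⟩ := exists_jacobiMatrix_charpoly_eq n z hz
  refine ⟨jacobiMatrix (n + 1) b fun k => (a k : ℂ),
    ⟨⟨b, a, rfl, hb, fun k h _ => hr k h, fun k _ _ => ha k⟩, hc⟩, ?_⟩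
  rintro _ ⟨⟨b', a', rfl, hb', hr', ha'⟩, hc'⟩
  exact jacobiMatrix_eq_of_charpoly_eq n b' b a' a hb' hr' (fun k h _ => hr k h)
    (fun k h1 h2 => ha' k h1 (by omega)) (fun k _ _ => ha k) (hc'.trans hc.symm)
end

section
/- For real x ≠ 0 and real y, the identity Σ_{k=-∞}^{∞} 2x/(x² + (y + 2πk)²) = -sinh(x)/(cos(y) - cosh(x)) holds. -/
theorem Complex.im_one_div_add_intCast (z : ℂ) (k : ℤ) :
    (1 / (z + k)).im = -z.im * ‖(((z + k) ^ (2 : ℤ))⁻¹ : ℂ)‖ := by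
  rw [norm_inv, norm_zpow, zpow_ofNat, ← Complex.normSq_eq_norm_sq, one_div, Complex.inv_im]
  simp [div_eq_mul_inv]

theorem Complex.summable_im_one_div_add_intCast (z : ℂ) :
    Summable fun k : ℤ ↦ (1 / (z + k)).im := by
  simp_rw [Complex.im_one_div_add_intCast]
  have h := (EisensteinSeries.linear_right_summable z 1 le_rfl).norm
  simp only [Int.cast_one, one_mul] at h
  exact h.mul_left _

theorem Complex.tsum_im_one_div_add_intCast {z : ℂ} (hz : z ∈ Complex.integerComplement) :
    ∑' k : ℤ, (1 / (z + k)).im = (Real.pi * Complex.cot (Real.pi * z)).im := by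
  have h := (Complex.summable_im_one_div_add_intCast z).hasSum.nat_add_neg
  rw [← hasSum_nat_add_iff' 1] at h
  have h' := Complex.hasSum_im (summable_cotTerm hz).hasSum
  rw [← cot_series_rep' hz] at h'
  have key := h.unique (h'.congr_fun fun n ↦ ?_)
  · simp only [Finset.sum_range_one, Complex.sub_im, Nat.cast_zero, neg_zero, Int.cast_zero, add_zero] at key
    linarith
  · rw [← Complex.add_im, add_comm, cotTerm]
    push_cast
    rw [← sub_eq_add_neg]

theorem Complex.im_cot_add_mul_I (a b : ℝ) :
    (Complex.cot (a + b * Complex.I)).im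
      = Real.sinh (2 * b) / (Real.cos (2 * a) - Real.cosh (2 * b)) := by
  have hs : Complex.sin (a + b * Complex.I)
      = ⟨Real.sin a * Real.cosh b, Real.cos a * Real.sinh b⟩ := by
    rw [Complex.sin_add_mul_I, Complex.mk_eq_add_mul_I]
    push_cast
    ring
  have hc : Complex.cos (a + b * Complex.I)
      = ⟨Real.cos a * Real.cosh b, -(Real.sin a * Real.sinh b)⟩ := by
    rw [Complex.cos_add_mul_I, Complex.mk_eq_add_mul_I]
    push_cast
    ring
  have hN : (Real.sin a * Real.cosh b) * (Real.sin a * Real.cosh b)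
      + (Real.cos a * Real.sinh b) * (Real.cos a * Real.sinh b)
      = (Real.cosh (2 * b) - Real.cos (2 * a)) / 2 := by
    rw [Real.cosh_two_mul, Real.cos_two_mul]
    linear_combination (Real.cosh b ^ 2) * Real.sin_sq_add_cos_sq a
      + (1 / 2 - Real.cos a ^ 2) * Real.cosh_sq_sub_sinh_sq b
  rw [Complex.cot, hs, hc, Complex.div_im, Complex.normSq_mk, hN, ← sub_div,
    ← neg_sub (Real.cosh (2 * b)), Real.sinh_two_mul]
  have hn : -(Real.sin a * Real.sinh b) * (Real.sin a * Real.cosh b)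
      - Real.cos a * Real.cosh b * (Real.cos a * Real.sinh b)
      = -(2 * Real.sinh b * Real.cosh b) / 2 := by
    linear_combination (-Real.sinh b * Real.cosh b) * Real.sin_sq_add_cos_sq a
  rw [hn, div_div_div_cancel_right₀ two_ne_zero, neg_div, div_neg]

/-- **Summation identity:**
`Σ_{k ∈ ℤ} 2x/(x² + (y + 2πk)²) = -sinh x / (cos y - cosh x)` for real `x ≠ 0`, `y`. -/
theorem sum_over_int_eq_neg_sinh_div (x y : ℝ) (hx : x ≠ 0) :
    ∑' k : ℤ, 2 * x / (x ^ 2 + (y + 2 * Real.pi * (k : ℝ)) ^ 2)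
      = -Real.sinh x / (Real.cos y - Real.cosh x) := by
  have hpi := Real.pi_ne_zero
  set z : ℂ := ⟨y / (2 * Real.pi), x / (2 * Real.pi)⟩ with hz_def
  have hz : z ∈ Complex.integerComplement := by
    rintro ⟨n, hn⟩
    have him := congrArg Complex.im hn
    simp only [Complex.intCast_im, hz_def] at him
    have : x / (2 * Real.pi) ≠ 0 := by positivity
    exact this him.symm
  have hterm (k : ℤ) : 2 * x / (x ^ 2 + (y + 2 * Real.pi * (k : ℝ)) ^ 2)
      = -(1 / Real.pi) * (1 / (z + k)).im := by
    have hden : Complex.normSq (z + k)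
        = (x ^ 2 + (y + 2 * Real.pi * (k : ℝ)) ^ 2) / (2 * Real.pi) ^ 2 := by
      simp only [Complex.normSq_apply, Complex.add_re, Complex.add_im, Complex.intCast_re,
        Complex.intCast_im, hz_def]
      field_simp
      ring
    have hpos : x ^ 2 + (y + 2 * Real.pi * (k : ℝ)) ^ 2 ≠ 0 := by positivity
    rw [one_div (z + k), Complex.inv_im, hden]
    simp only [Complex.add_im, Complex.intCast_im, hz_def]
    field_simp
    ring
  have hpz : (Real.pi : ℂ) * z = ((y / 2 : ℝ) : ℂ) + ((x / 2 : ℝ) : ℂ) * Complex.I := by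
    apply Complex.ext <;> simp [hz_def] <;> field_simp
  simp_rw [hterm]
  rw [tsum_mul_left, Complex.tsum_im_one_div_add_intCast hz, Complex.im_ofReal_mul, hpz,
    Complex.im_cot_add_mul_I, mul_div_cancel₀ _ two_ne_zero, mul_div_cancel₀ _ two_ne_zero]
  field_simp
end
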